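/- For the inverted pendulum in a vertical plane with horizontally and vertically actuated base, with mass matrix g(x) given by g₁₁ = 1, g₁₂ = −a cos(x¹), g₁₃ = −a sin(x¹), g₂₂ = g₃₃ = 1, g₂₃ = 0 (0 < a < 1), the map λ = (λ¹, λ², λ³) with λ¹(x) = σ₀, λ²(x) = μ₀ cos(x¹), λ³(x) = 0 satisfies the λ-equations ∂(g_{1i}λ^i)/∂x^k − 2[k1,i]λ^i = 0 on ℝ³ for every k = 1,2,3 and every choice of constants σ₀, μ₀ ∈ ℝ. -/

import Mathlib

/-- Partial derivative in the `k`-th coordinate direction. -/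
noncomputable def pd {n : ℕ} (k : Fin n) (f : (Fin n → ℝ) → ℝ) (x : Fin n → ℝ) : ℝ :=
  fderiv ℝ f x (Pi.single k 1)

/-- Christoffel symbol of the first kind `[ij,k]` of the matrix-valued map `g`. -/
noncomputable def chr {n : ℕ} (g : (Fin n → ℝ) → Matrix (Fin n) (Fin n) ℝ)
    (i j k : Fin n) (x : Fin n → ℝ) : ℝ :=
  (1/2) * (pd i (fun y => g y j k) x + pd j (fun y => g y i k) x - pd k (fun y => g y i j) x)

/-- Mass matrix of the inverted pendulum in a vertical plane. -/
noncomputable def gPend (a : ℝ) (x : Fin 3 → ℝ) : Matrix (Fin 3) (Fin 3) ℝ :=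
  !![1, -a * Real.cos (x 0), -a * Real.sin (x 0);
     -a * Real.cos (x 0), 1, 0;
     -a * Real.sin (x 0), 0, 1]

/-!
Expanding the derivative of the product and the Christoffel symbols, the derivatives
`∂g_{pi}/∂x^k` cancel from the `λ`-equations. If `g` and `λ` depend on `x^p` alone, what remains is
a linear system of ordinary differential equations in `x^p`: the equations `k ≠ p` involve only the
derivatives of the block `g_{ki}`, `i ≠ p`, and the equation `k = p` says that the Wronskians of
`g_{pi}` and `λ^i`, `i ≠ p`, and the term `g_{pp} dλ^p/dx^p` add up to zero. For the pendulum that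
block and `λ^p` are constant, and `λ^i` and `g_{pi}` are constant multiples of one function for each
`i ≠ p`, so that all the Wronskians vanish.
-/

/-- The `λ`-equations `∂(g_{pi} λ^i)/∂x^k - 2 [kp,i] λ^i = 0` on all of `ℝⁿ`, where `p` is the
single unactuated degree of freedom and `l` stands for `λ`. Differentiability of
`g` and `l`, without which `pd` and `chr` take junk values, is not part of the notion. -/
def IsLambdaSolution {n : ℕ} (g : (Fin n → ℝ) → Matrix (Fin n) (Fin n) ℝ) (p : Fin n)
    (l : (Fin n → ℝ) → Fin n → ℝ) : Prop :=
  ∀ (x : Fin n → ℝ) (k : Fin n),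
    pd k (fun y => ∑ i, g y p i * l y i) x - 2 * ∑ i, chr g k p i x * l x i = 0

section PartialDerivative

variable {n : ℕ} {x : Fin n → ℝ}

lemma pd_fun_mul {f h : (Fin n → ℝ) → ℝ} (hf : DifferentiableAt ℝ f x)
    (hh : DifferentiableAt ℝ h x) (k : Fin n) :
    pd k (fun y => f y * h y) x = f x * pd k h x + pd k f x * h x := by
  simp [pd, fderiv_fun_mul hf hh, mul_comm (h x)]

lemma pd_fun_sum {ι : Type*} {s : Finset ι} {f : ι → (Fin n → ℝ) → ℝ}
    (hf : ∀ i ∈ s, DifferentiableAt ℝ (f i) x) (k : Fin n) :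
    pd k (fun y => ∑ i ∈ s, f i y) x = ∑ i ∈ s, pd k (f i) x := by
  simp [pd, fderiv_fun_sum hf]

lemma pd_comp_apply {F : ℝ → ℝ} {p : Fin n} (hF : DifferentiableAt ℝ F (x p)) (k : Fin n) :
    pd k (fun y => F (y p)) x = if k = p then deriv F (x p) else 0 := by
  have hcomp : HasFDerivAt (fun y : Fin n → ℝ => F (y p))
      (deriv F (x p) • ContinuousLinearMap.proj (R := ℝ) (φ := fun _ : Fin n => ℝ) p) x :=
    hF.hasDerivAt.comp_hasFDerivAt x (hasFDerivAt_apply p x)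
  simp [pd, hcomp.fderiv, Pi.single_apply, eq_comm]

end PartialDerivative

section LambdaEquations

variable {n : ℕ} {p : Fin n}

lemma pd_sum_mul_sub_two_mul_sum_chr_mul {g : (Fin n → ℝ) → Matrix (Fin n) (Fin n) ℝ}
    {l : (Fin n → ℝ) → Fin n → ℝ} {x : Fin n → ℝ}
    (hg : ∀ i, DifferentiableAt ℝ (fun y => g y p i) x)
    (hl : ∀ i, DifferentiableAt ℝ (fun y => l y i) x) (k : Fin n) :
    pd k (fun y => ∑ i, g y p i * l y i) x - 2 * ∑ i, chr g k p i x * l x i =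
      ∑ i, (g x p i * pd k (fun y => l y i) x
        - (pd p (fun y => g y k i) x - pd i (fun y => g y k p) x) * l x i) := by
  rw [pd_fun_sum fun i _ => (hg i).fun_mul (hl i), Finset.mul_sum, ← Finset.sum_sub_distrib]
  refine Finset.sum_congr rfl fun i _ => ?_
  rw [pd_fun_mul (hg i) (hl i), chr]
  ring

theorem isLambdaSolution_comp_apply_iff {G : ℝ → Matrix (Fin n) (Fin n) ℝ} {l : ℝ → Fin n → ℝ}
    (hG : ∀ i j, Differentiable ℝ fun t => G t i j) (hl : ∀ i, Differentiable ℝ fun t => l t i) :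
    IsLambdaSolution (fun y => G (y p)) p (fun y => l (y p)) ↔
      ∀ t k, ∑ i ∈ Finset.univ.erase p, deriv (fun s => G s k i) t * l t i =
        if k = p then ∑ i, G t p i * deriv (fun s => l s i) t else 0 := by
  have hproj (x : Fin n → ℝ) : DifferentiableAt ℝ (fun y : Fin n → ℝ => y p) x :=
    differentiableAt_apply p x
  have hdefect (x : Fin n → ℝ) (k : Fin n) :
      pd k (fun y => ∑ i, G (y p) p i * l (y p) i) x
          - 2 * ∑ i, chr (fun y => G (y p)) k p i x * l (x p) i =
        (if k = p then ∑ i, G (x p) p i * deriv (fun s => l s i) (x p) else 0)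
          - ∑ i ∈ Finset.univ.erase p, deriv (fun s => G s k i) (x p) * l (x p) i := by
    rw [pd_sum_mul_sub_two_mul_sum_chr_mul (g := fun y => G (y p)) (l := fun y => l (y p))
      (fun i => (hG p i _).fun_comp' x (hproj x)) (fun i => (hl i _).fun_comp' x (hproj x))]
    simp only [pd_comp_apply (hl _ _), pd_comp_apply (hG _ _ _), sub_mul, Finset.sum_sub_distrib,
      ite_mul, zero_mul, mul_ite, mul_zero, if_true, Finset.sum_ite_eq', Finset.mem_univ,
      Finset.sum_erase_eq_sub]
    split_ifs <;> simp
  refine ⟨fun h t k => ?_, fun h x k => ?_⟩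
  · exact (sub_eq_zero.mp ((hdefect (fun _ => t) k).symm.trans (h (fun _ => t) k))).symm
  · exact (hdefect x k).trans (sub_eq_zero.mpr (h (x p) k).symm)

theorem isLambdaSolution_comp_apply_of_wronskian_eq_zero {G : ℝ → Matrix (Fin n) (Fin n) ℝ}
    {l : ℝ → Fin n → ℝ} (hG : ∀ i j, Differentiable ℝ fun t => G t i j)
    (hl : ∀ i, Differentiable ℝ fun t => l t i)
    (hblock : ∀ i ≠ p, ∀ j ≠ p, ∀ t, deriv (fun s => G s i j) t = 0)
    (hlp : ∀ t, deriv (fun s => l s p) t = 0)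
    (hwronskian : ∀ i ≠ p, ∀ t,
      deriv (fun s => G s p i) t * l t i = G t p i * deriv (fun s => l s i) t) :
    IsLambdaSolution (fun y => G (y p)) p (fun y => l (y p)) := by
  refine (isLambdaSolution_comp_apply_iff hG hl).mpr fun t k => ?_
  split_ifs with hk
  · subst hk
    rw [← Finset.sum_erase Finset.univ (a := k) (by rw [hlp, mul_zero])]
    exact Finset.sum_congr rfl fun i hi => hwronskian i (Finset.ne_of_mem_erase hi) t
  · refine Finset.sum_eq_zero fun i hi => ?_
    rw [hblock k hk i (Finset.ne_of_mem_erase hi), zero_mul]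

end LambdaEquations

theorem pendulum_lambda_solution_general (a σ₀ μ₀ ν₀ : ℝ) :
    IsLambdaSolution (gPend a) 0 fun y => ![σ₀, μ₀ * Real.cos (y 0), ν₀ * Real.sin (y 0)] := by
  refine isLambdaSolution_comp_apply_of_wronskian_eq_zero (G := fun t => gPend a fun _ => t)
    (l := fun t => ![σ₀, μ₀ * Real.cos t, ν₀ * Real.sin t]) ?hG ?hl ?hblock ?hlp ?hwronskian
  case hG =>
    intro i j
    fin_cases i <;> fin_cases j <;> simp [gPend]
  case hl =>
    intro i
    fin_cases i <;> simp
  case hblock =>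
    intro i hi j hj t
    fin_cases i <;> fin_cases j <;> simp_all [gPend]
  case hlp => simp
  case hwronskian =>
    intro i hi t
    fin_cases i
    · exact absurd rfl hi
    all_goals simp [gPend]; ring

/-- For the inverted pendulum in a vertical plane, `λ = (σ₀, μ₀ cos x¹, 0)`
solves the λ-equations on all of ℝ³, for every σ₀, μ₀. -/
theorem pendulum_lambda_solution (a : ℝ) (ha : 0 < a) (ha1 : a < 1) (σ₀ μ₀ : ℝ) :
    ∀ (x : Fin 3 → ℝ) (k : Fin 3),
      pd k (fun y => ∑ i, gPend a y 0 i * ![σ₀, μ₀ * Real.cos (y 0), 0] i) x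
        - 2 * ∑ i, chr (gPend a) k 0 i x * ![σ₀, μ₀ * Real.cos (x 0), 0] i = 0 := by
  simpa only [IsLambdaSolution, zero_mul] using pendulum_lambda_solution_general a σ₀ μ₀ 0
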